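/- arXiv:1902.01467 — 7 statements merged into one kernel-verified Lean document; each statement's English description precedes it below -/
import Mathlib

section
/- Let 𝔤 be a finite-dimensional simple real Lie algebra and let 𝔭 be a Lie subalgebra of 𝔤 whose polar 𝔭^⊥ with respect to the Killing form is an abelian Lie subalgebra of 𝔤 (i.e. 𝔭 is a height-one parabolic subalgebra). Then 𝔭^⊥ ⊆ 𝔭. -/
/-!
Let `𝔫 = 𝔭^⊥` be abelian. Invariance of the Killing form gives `[𝔫, 𝔤] ⊆ 𝔫^⊥` and
`[𝔫, 𝔫^⊥] ⊆ 𝔫`. Hence for `x, y ∈ 𝔫` the map `ad y ∘ ad x ∘ ad y` sends `𝔤` to `𝔫^⊥`, then to `𝔫`,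
then to `0`, so `ad x ∘ ad y` squares to zero and has trace zero. Thus `𝔫 ⊆ 𝔫^⊥`, and
`𝔫^⊥ = 𝔭^⊥⊥ = 𝔭` because the Killing form is nondegenerate.
-/

section CommRing

variable {R L : Type*} [CommRing R] [LieRing L] [LieAlgebra R L]

lemma killingForm_eq_zero_of_lie_lie_lie_eq_zero [IsReduced R] {x y : L}
    (h : ∀ z : L, ⁅y, ⁅x, ⁅y, z⁆⁆⁆ = 0) : killingForm R L x y = 0 := by
  have hsq : (LieAlgebra.ad R L x ∘ₗ LieAlgebra.ad R L y) ^ 2 = 0 := by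
    ext z
    simp [pow_two, h z]
  rw [killingForm_apply_apply]
  exact (LinearMap.isNilpotent_trace_of_isNilpotent ⟨2, hsq⟩).eq_zero

variable (R) in
/-- The polar `N^⊥` of a subspace `N` of a Lie algebra: its orthogonal complement with respect to
the Killing form. As the Killing form is symmetric, the left and right complements agree. -/
noncomputable def killingPolar (N : Submodule R L) : Submodule R L :=
  (killingForm R L).orthogonal N

lemma mem_killingPolar {N : Submodule R L} {x : L} :
    x ∈ killingPolar R N ↔ ∀ u ∈ N, killingForm R L x u = 0 :=
  forall₂_congr fun u _ ↦ by rw [LieModule.traceForm_comm]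

lemma lie_mem_killingPolar_of_forall_lie_eq_zero {N : Submodule R L} {x : L}
    (hx : ∀ y ∈ N, ⁅x, y⁆ = 0) (z : L) : ⁅x, z⁆ ∈ killingPolar R N := by
  refine mem_killingPolar.2 fun y hy ↦ ?_
  rw [← lie_skew, map_neg, LinearMap.neg_apply, LieModule.traceForm_apply_lie_apply, hx y hy,
    map_zero, neg_zero]

lemma lie_mem_killingPolar_of_mem {p : LieSubalgebra R L} {x u : L}
    (hx : x ∈ killingPolar R p.toSubmodule) (hu : u ∈ p) :
    ⁅x, u⁆ ∈ killingPolar R p.toSubmodule := by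
  refine mem_killingPolar.2 fun v hv ↦ ?_
  rw [LieModule.traceForm_apply_lie_apply]
  exact mem_killingPolar.1 hx _ (p.lie_mem hu hv)

lemma lie_mem_killingPolar_of_mem_killingPolar_killingPolar {p : LieSubalgebra R L} {x z : L}
    (hx : x ∈ killingPolar R p.toSubmodule)
    (hz : z ∈ killingPolar R (killingPolar R p.toSubmodule)) :
    ⁅x, z⁆ ∈ killingPolar R p.toSubmodule := by
  refine mem_killingPolar.2 fun u hu ↦ ?_
  rw [← lie_skew, map_neg, LinearMap.neg_apply, LieModule.traceForm_apply_lie_apply,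
    mem_killingPolar.1 hz _ (lie_mem_killingPolar_of_mem hx hu), neg_zero]

theorem killingPolar_le_killingPolar_killingPolar [IsReduced R] {p : LieSubalgebra R L}
    (habel : ∀ x ∈ killingPolar R p.toSubmodule, ∀ y ∈ killingPolar R p.toSubmodule, ⁅x, y⁆ = 0) :
    killingPolar R p.toSubmodule ≤ killingPolar R (killingPolar R p.toSubmodule) := by
  intro x hx
  refine mem_killingPolar.2 fun y hy ↦ killingForm_eq_zero_of_lie_lie_lie_eq_zero fun z ↦ ?_
  have hyz : ⁅y, z⁆ ∈ killingPolar R (killingPolar R p.toSubmodule) :=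
    lie_mem_killingPolar_of_forall_lie_eq_zero (habel y hy) z
  exact habel y hy _ (lie_mem_killingPolar_of_mem_killingPolar_killingPolar hx hyz)

end CommRing

section Field

variable {K L : Type*} [Field K] [LieRing L] [LieAlgebra K L] [FiniteDimensional K L]
  [LieAlgebra.IsKilling K L]

lemma killingPolar_killingPolar (N : Submodule K L) : killingPolar K (killingPolar K N) = N :=
  LinearMap.BilinForm.orthogonal_orthogonal
    (LieAlgebra.IsKilling.killingForm_nondegenerate K L)
    (LieModule.traceForm_isSymm K L L).isRefl N

theorem polar_subset_of_heightOneParabolic_general (p : LieSubalgebra K L)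
    (habel : ∀ x ∈ killingPolar K p.toSubmodule, ∀ y ∈ killingPolar K p.toSubmodule, ⁅x, y⁆ = 0) :
    killingPolar K p.toSubmodule ≤ p.toSubmodule :=
  (killingPolar_le_killingPolar_killingPolar habel).trans_eq (killingPolar_killingPolar _)

end Field

/-- Let `𝔤` be a finite-dimensional simple real Lie algebra and `𝔭` a Lie subalgebra whose
polar with respect to the Killing form is an abelian Lie subalgebra (i.e. `𝔭` is a
height-one parabolic subalgebra).  Then `𝔭^⊥ ⊆ 𝔭`. -/
theorem polar_subset_of_heightOneParabolic
    (L : Type*) [LieRing L] [LieAlgebra ℝ L] [FiniteDimensional ℝ L]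
    [LieAlgebra.IsSimple ℝ L] (p : LieSubalgebra ℝ L)
    (habel : ∀ x y : L,
      (∀ u ∈ p, killingForm ℝ L x u = 0) →
      (∀ u ∈ p, killingForm ℝ L y u = 0) → ⁅x, y⁆ = 0) :
    ∀ x : L, (∀ u ∈ p, killingForm ℝ L x u = 0) → x ∈ p :=
  fun _ hx ↦ polar_subset_of_heightOneParabolic_general p
    (fun x hx y hy ↦ habel x y (mem_killingPolar.1 hx) (mem_killingPolar.1 hy))
    (mem_killingPolar.2 hx)
end

section
/- Let 𝔤 be a finite-dimensional real Lie algebra and let 𝔭 be a Lie subalgebra of 𝔤 whose polar 𝔭^⊥ with respect to the Killing form is an abelian Lie subalgebra. Then for every y ∈ 𝔭^⊥ and every z ∈ 𝔭 one has [y,[y,z]] = 0; that is, 𝔭 ⊆ Ker((ad_y)²). -/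
lemma mem_orthogonal_iff_of_isRefl {R M : Type*} [CommSemiring R] [AddCommMonoid M] [Module R M]
    {B : LinearMap.BilinForm R M} (hB : LinearMap.IsRefl B) {N : Submodule R M} {m : M} :
    m ∈ B.orthogonal N ↔ ∀ n ∈ N, B m n = 0 :=
  forall₂_congr fun _ _ ↦ hB.eq_iff

section InvariantForm

variable {R L M : Type*} [CommRing R] [LieRing L] [AddCommGroup M] [Module R M] [LieRingModule L M]

lemma lie_mem_orthogonal_of_lieInvariant {Φ : LinearMap.BilinForm R M} (hΦ : Φ.lieInvariant L)
    {N : Submodule R M} {x : L} (hN : ∀ n ∈ N, ⁅x, n⁆ ∈ N) {m : M} (hm : m ∈ Φ.orthogonal N) :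
    ⁅x, m⁆ ∈ Φ.orthogonal N := by
  intro n hn
  calc Φ n ⁅x, m⁆ = -Φ ⁅x, n⁆ m := by rw [hΦ, neg_neg]
    _ = 0 := by rw [hm _ (hN n hn), neg_zero]

variable [LieAlgebra R L]

theorem subalgebra_subset_ker_ad_sq_general {Φ : LinearMap.BilinForm R L} (hΦ : Φ.lieInvariant L)
    (p : LieSubalgebra R L)
    (habel : ∀ x y : L,
      x ∈ Φ.orthogonal p.toSubmodule → y ∈ Φ.orthogonal p.toSubmodule → ⁅x, y⁆ = 0) :
    ∀ y ∈ Φ.orthogonal p.toSubmodule, ∀ z ∈ p, ⁅y, ⁅y, z⁆⁆ = 0 := by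
  intro y hy z hz
  have hzy : ⁅z, y⁆ ∈ Φ.orthogonal p.toSubmodule :=
    lie_mem_orthogonal_of_lieInvariant hΦ (fun _ hu ↦ p.lie_mem hz hu) hy
  rw [← lie_skew y z, lie_neg, habel y ⁅z, y⁆ hy hzy, neg_zero]

end InvariantForm

/-- Let `𝔤` be a finite-dimensional real Lie algebra and `𝔭` a Lie subalgebra whose polar
`𝔭^⊥` with respect to the Killing form is an abelian Lie subalgebra.  Then for every
`y ∈ 𝔭^⊥` and every `z ∈ 𝔭` one has `⁅y, ⁅y, z⁆⁆ = 0`, i.e. `𝔭 ⊆ Ker((ad y)²)`. -/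
theorem subalgebra_subset_ker_ad_sq
    (L : Type*) [LieRing L] [LieAlgebra ℝ L] [FiniteDimensional ℝ L]
    (p : LieSubalgebra ℝ L)
    (habel : ∀ x y : L,
      (∀ u ∈ p, killingForm ℝ L x u = 0) →
      (∀ u ∈ p, killingForm ℝ L y u = 0) → ⁅x, y⁆ = 0) :
    ∀ y : L, (∀ u ∈ p, killingForm ℝ L y u = 0) →
      ∀ z ∈ p, ⁅y, ⁅y, z⁆⁆ = 0 := by
  simp only [← p.mem_toSubmodule,
    ← mem_orthogonal_iff_of_isRefl (LieModule.traceForm_isSymm ℝ L L).isRefl] at habel ⊢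
  exact subalgebra_subset_ker_ad_sq_general (LieModule.traceForm_lieInvariant ℝ L L) p habel
end

section
/- Let 𝔤 be a finite-dimensional simple real Lie algebra and let 𝔭, 𝔮 be Lie subalgebras of 𝔤, each with abelian polar with respect to the Killing form (height-one parabolic), and with dim 𝔭 = dim 𝔮. Suppose y ∈ 𝔤 satisfies y ∈ 𝔭^⊥, y ∈ 𝔮^⊥ and Ker((ad_y)²) = 𝔮. Then 𝔭 = 𝔮. (In particular, a vector y ∈ 𝔤 can satisfy the prevalence condition 'y ∈ 𝔭^⊥ and Ker((ad_y)²) = 𝔭' for at most one member 𝔭 of a conjugacy class of height-one parabolic subalgebras.) -/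
/-!
Invariance of the form makes the polar `𝔭^⊥` stable under `ad 𝔭`. Hence for `u ∈ 𝔭` the bracket
`⁅y, u⁆` stays in `𝔭^⊥`, where it commutes with `y`; that is, `(ad y)² u = 0`. So `𝔭` lies in
`Ker((ad y)²) = 𝔮`, and equality of dimensions forces `𝔭 = 𝔮`.
-/

section InvariantForm

variable {R L : Type*} [CommRing R] [LieRing L] [LieAlgebra R L]
  {B : LinearMap.BilinForm R L} {p : LieSubalgebra R L} {u y : L}

theorem lie_mem_orthogonal_of_mem (hB : B.lieInvariant p) (hu : u ∈ p)
    (hy : y ∈ B.orthogonal p.toSubmodule) : ⁅u, y⁆ ∈ B.orthogonal p.toSubmodule :=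
  (LieAlgebra.InvariantForm.orthogonal B hB p.toLieSubmodule).lie_mem (x := ⟨u, hu⟩) hy

theorem toSubmodule_le_ker_ad_sq (hB : B.lieInvariant p)
    (hy : y ∈ B.orthogonal p.toSubmodule)
    (hcomm : ∀ z ∈ B.orthogonal p.toSubmodule, ⁅y, z⁆ = 0) :
    p.toSubmodule ≤ LinearMap.ker (LieAlgebra.ad R L y ^ 2) := by
  intro u hu
  have lie_mem : ⁅y, u⁆ ∈ B.orthogonal p.toSubmodule := by
    rw [← lie_skew]
    exact neg_mem (lie_mem_orthogonal_of_mem hB hu hy)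
  rw [LinearMap.mem_ker, pow_two, Module.End.mul_apply, LieAlgebra.ad_apply, LieAlgebra.ad_apply]
  exact hcomm _ lie_mem

theorem mem_orthogonal_killingForm_iff {N : Submodule R L} :
    y ∈ (killingForm R L).orthogonal N ↔ ∀ u ∈ N, killingForm R L y u = 0 := by
  simp only [LinearMap.BilinForm.mem_orthogonal_iff, LieModule.traceForm_comm R L L y]

end InvariantForm

theorem eq_of_prevalence_general {K L : Type*} [Field K] [LieRing L] [LieAlgebra K L]
    {B : LinearMap.BilinForm K L} {p q : LieSubalgebra K L} [FiniteDimensional K q]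
    (hB : B.lieInvariant p) (hdim : Module.finrank K p = Module.finrank K q) {y : L}
    (hy : y ∈ B.orthogonal p.toSubmodule)
    (hcomm : ∀ z ∈ B.orthogonal p.toSubmodule, ⁅y, z⁆ = 0)
    (hker : LinearMap.ker (LieAlgebra.ad K L y ^ 2) = q.toSubmodule) :
    p = q := by
  have p_le_q : p.toSubmodule ≤ q.toSubmodule := hker ▸ toSubmodule_le_ker_ad_sq hB hy hcomm
  exact LieSubalgebra.toSubmodule_injective (Submodule.eq_of_le_of_finrank_eq p_le_q hdim)

/-- In a finite-dimensional simple real Lie algebra, if `𝔭` and `𝔮` are Lie subalgebras with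
abelian polars (height-one parabolic) of the same dimension, and `y ∈ 𝔭^⊥ ∩ 𝔮^⊥` satisfies
`Ker((ad y)²) = 𝔮`, then `𝔭 = 𝔮`; in particular a vector can be prevalent for at most one
member of a conjugacy class of height-one parabolic subalgebras. -/
theorem eq_of_prevalence
    (L : Type*) [LieRing L] [LieAlgebra ℝ L] [FiniteDimensional ℝ L]
    [LieAlgebra.IsSimple ℝ L] (p q : LieSubalgebra ℝ L)
    (habelp : ∀ x y : L,
      (∀ u ∈ p, killingForm ℝ L x u = 0) →
      (∀ u ∈ p, killingForm ℝ L y u = 0) → ⁅x, y⁆ = 0)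
    (habelq : ∀ x y : L,
      (∀ u ∈ q, killingForm ℝ L x u = 0) →
      (∀ u ∈ q, killingForm ℝ L y u = 0) → ⁅x, y⁆ = 0)
    (hdim : Module.finrank ℝ p = Module.finrank ℝ q)
    (y : L)
    (hyp : ∀ u ∈ p, killingForm ℝ L y u = 0)
    (hyq : ∀ u ∈ q, killingForm ℝ L y u = 0)
    (hker : LinearMap.ker ((LieAlgebra.ad ℝ L y) ^ 2) = (q : Submodule ℝ L)) :
    p = q := by
  exact eq_of_prevalence_general (fun u => LieModule.traceForm_lieInvariant ℝ L L u) hdim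
    (mem_orthogonal_killingForm_iff.2 hyp)
    (fun z hz => habelp y z hyp (mem_orthogonal_killingForm_iff.1 hz)) hker
end

section
/- Let 𝔤 be a finite-dimensional real Lie algebra and let 𝔮 be a Lie subalgebra of 𝔤 whose polar 𝔮^⊥ with respect to the Killing form is an abelian Lie subalgebra. Then for every z ∈ 𝔮^⊥ and every y ∈ 𝔤, the exponential of the endomorphism ad_z satisfies exp(ad_z)(y) = y + [z,y] + (1/2)[z,[z,y]]. -/
/-- The exponential of a nilpotent element of a real algebra: since `a ^ i = 0` for all
`i ≥ nilpotencyClass a`, the exponential series reduces to the finite sum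
`∑_{i < nilpotencyClass a} a ^ i / i!`. -/
noncomputable def expNilpotent {A : Type*} [Ring A] [Algebra ℝ A] (a : A) : A :=
  ∑ i ∈ Finset.range (nilpotencyClass a), (i.factorial : ℝ)⁻¹ • a ^ i

/-!
Let `z ∈ 𝔮^⊥`. Invariance of the form `Φ` makes `𝔮^⊥` stable under `ad 𝔮`, so for `u ∈ 𝔮` both
`⁅u, z⁆` and `z` lie in the abelian `𝔮^⊥`, and moving brackets across the form gives
`Φ u ⁅z, ⁅z, v⁆⁆ = Φ ⁅⁅u, z⁆, z⁆ v = 0`. Hence `(ad z)²` maps into `𝔮^⊥`, which `ad z` kills: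
`(ad z)³ = 0`, and the exponential series stops after the quadratic term.
-/

open LinearMap (BilinForm)

section InvariantForm

variable {R L M : Type*} [CommRing R] [LieRing L]

theorem lie_mem_orthogonal [AddCommGroup M] [Module R M] [LieRingModule L M]
    {Φ : BilinForm R M} (hΦ : Φ.lieInvariant L) {N : Submodule R M} {u : L}
    (hu : ∀ n ∈ N, ⁅u, n⁆ ∈ N) {m : M} (hm : m ∈ Φ.orthogonal N) :
    ⁅u, m⁆ ∈ Φ.orthogonal N := by
  intro n hn
  rw [← neg_eq_zero, ← hΦ]
  exact hm _ (hu n hn)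

variable [LieAlgebra R L] {Φ : BilinForm R L} {q : LieSubalgebra R L}

theorem apply_lie_right_eq_apply_lie_left (hΦ : Φ.lieInvariant L) (x y z : L) :
    Φ x ⁅y, z⁆ = Φ ⁅x, y⁆ z := by
  rw [← lie_skew x y, map_neg, LinearMap.neg_apply, hΦ, neg_neg]

theorem lie_lie_mem_orthogonal_of_abelian (hΦ : Φ.lieInvariant L)
    (habel : ∀ x ∈ Φ.orthogonal q.toSubmodule, ∀ y ∈ Φ.orthogonal q.toSubmodule, ⁅x, y⁆ = 0)
    {z : L} (hz : z ∈ Φ.orthogonal q.toSubmodule) (v : L) :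
    ⁅z, ⁅z, v⁆⁆ ∈ Φ.orthogonal q.toSubmodule := by
  intro u hu
  have huz : ⁅u, z⁆ ∈ Φ.orthogonal q.toSubmodule :=
    lie_mem_orthogonal hΦ (fun _ ↦ q.lie_mem hu) hz
  calc Φ u ⁅z, ⁅z, v⁆⁆
      = Φ ⁅⁅u, z⁆, z⁆ v := by simp only [apply_lie_right_eq_apply_lie_left hΦ]
    _ = 0 := by rw [habel _ huz _ hz, map_zero, LinearMap.zero_apply]

theorem ad_pow_three_eq_zero_of_abelian_orthogonal (hΦ : Φ.lieInvariant L)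
    (habel : ∀ x ∈ Φ.orthogonal q.toSubmodule, ∀ y ∈ Φ.orthogonal q.toSubmodule, ⁅x, y⁆ = 0)
    {z : L} (hz : z ∈ Φ.orthogonal q.toSubmodule) :
    LieAlgebra.ad R L z ^ 3 = 0 := by
  ext v
  simpa [pow_succ] using habel z hz _ (lie_lie_mem_orthogonal_of_abelian hΦ habel hz v)

end InvariantForm

theorem expNilpotent_eq_sum_range {A : Type*} [Ring A] [Algebra ℝ A] {a : A} {n : ℕ}
    (ha : a ^ n = 0) :
    expNilpotent a = ∑ i ∈ Finset.range n, (i.factorial : ℝ)⁻¹ • a ^ i := by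
  refine Finset.sum_subset (Finset.range_subset_range.2 (Nat.sInf_le ha)) fun i _ hi ↦ ?_
  have hle : nilpotencyClass a ≤ i := by simpa using hi
  rw [pow_eq_zero_of_le hle (pow_nilpotencyClass ⟨n, ha⟩), smul_zero]

theorem exp_ad_apply_general {L : Type*} [LieRing L] [LieAlgebra ℝ L] {Φ : BilinForm ℝ L}
    (hΦ : Φ.lieInvariant L) {q : LieSubalgebra ℝ L}
    (habel : ∀ x ∈ Φ.orthogonal q.toSubmodule, ∀ y ∈ Φ.orthogonal q.toSubmodule, ⁅x, y⁆ = 0)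
    {z : L} (hz : z ∈ Φ.orthogonal q.toSubmodule) (y : L) :
    expNilpotent (LieAlgebra.ad ℝ L z) y = y + ⁅z, y⁆ + (1 / 2 : ℝ) • ⁅z, ⁅z, y⁆⁆ := by
  rw [expNilpotent_eq_sum_range (ad_pow_three_eq_zero_of_abelian_orthogonal hΦ habel hz)]
  simp [Finset.sum_range_succ, pow_succ]

theorem mem_killingForm_orthogonal_iff {R L : Type*} [CommRing R] [LieRing L] [LieAlgebra R L]
    {N : Submodule R L} {x : L} :
    x ∈ (killingForm R L).orthogonal N ↔ ∀ u ∈ N, killingForm R L x u = 0 := by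
  simp only [LinearMap.BilinForm.mem_orthogonal_iff, LieModule.traceForm_comm R L L x]

/-- Let `𝔤` be a finite-dimensional real Lie algebra and `𝔮` a Lie subalgebra whose polar
`𝔮^⊥` with respect to the Killing form is an abelian Lie subalgebra.  Then for every
`z ∈ 𝔮^⊥` and every `y ∈ 𝔤`, the exponential of the endomorphism `ad z` satisfies
`exp (ad z) y = y + ⁅z, y⁆ + (1/2) ⁅z, ⁅z, y⁆⁆`. -/
theorem exp_ad_apply
    (L : Type*) [LieRing L] [LieAlgebra ℝ L] [FiniteDimensional ℝ L]
    (q : LieSubalgebra ℝ L)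
    (habel : ∀ x y : L,
      (∀ u ∈ q, killingForm ℝ L x u = 0) →
      (∀ u ∈ q, killingForm ℝ L y u = 0) → ⁅x, y⁆ = 0) :
    ∀ z : L, (∀ u ∈ q, killingForm ℝ L z u = 0) →
      ∀ y : L,
        expNilpotent (LieAlgebra.ad ℝ L z) y
          = y + ⁅z, y⁆ + (1 / 2 : ℝ) • ⁅z, ⁅z, y⁆⁆ := by
  intro z hz y
  exact exp_ad_apply_general (LieModule.traceForm_lieInvariant ℝ L L)
    (fun x hx w hw ↦ habel x w (mem_killingForm_orthogonal_iff.1 hx)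
      (mem_killingForm_orthogonal_iff.1 hw))
    (mem_killingForm_orthogonal_iff.2 hz) y
end

section
/- Let V be a real vector space of dimension 2n, ε ∈ {1,−1}, and f : V × V → ℝ a nondegenerate bilinear form with f(x,y) = ε f(y,x). Let P, Q be totally isotropic subspaces of dimension n with V = P ⊕ Q, let u₁,…,uₙ be a basis of P and v₁,…,vₙ a basis of Q with f(uᵢ,vⱼ) = δᵢⱼ, and let J : V → V be the linear map determined by J(uᵢ) = vᵢ and J(vᵢ) = ε·uᵢ for all i. Then J² = ε·id, f(J(x),J(y)) = f(x,y) for all x,y ∈ V, and the bilinear form D(x,y) = f(J(x),y) is symmetric and definite; more precisely ε·D is positive definite. -/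
/-!
The vectors `uᵢ, vᵢ` together form a basis of `V`, and on it the Gram matrix of `ε • D` is the
identity. Hence `D` is symmetric and `ε • D` is positive definite: it is the sum of squares of the
coordinates. The identity `J² = ε` is read off the basis, and `J` preserves `f` because
`f (J x) (J y) = D x (J y) = D (J y) x = f (J² y) x = ε f y x = f x y`.
-/

open Module

section BilinearForm

variable {R M ι : Type*} [CommRing R] [AddCommGroup M] [Module R M] [DecidableEq ι]
  {B : M →ₗ[R] M →ₗ[R] R} {b : Basis ι R M}

theorem isSymm_of_smul_isSymm {c : R} (hc : IsUnit c) (h : (c • B).IsSymm) : B.IsSymm where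
  eq x y := hc.mul_left_cancel (h.eq x y)

theorem isSymm_of_orthonormal_basis
    (hb : ∀ i j, B (b i) (b j) = if i = j then 1 else 0) : B.IsSymm := by
  refine LinearMap.isSymm_iff_eq_flip.mpr (LinearMap.ext_basis b b fun i j => ?_)
  simp only [LinearMap.flip_apply, hb, eq_comm]

theorem apply_self_eq_sum_sq_repr_of_orthonormal_basis
    (hb : ∀ i j, B (b i) (b j) = if i = j then 1 else 0) (x : M) :
    B x x = ∑ i ∈ (b.repr x).support, b.repr x i ^ 2 := by
  rw [← LinearMap.sum_repr_mul_repr_mul b b]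
  refine Finset.sum_congr rfl fun i hi => ?_
  simp [Finsupp.sum, hb, sq, Finsupp.mem_support_iff.mp hi]

theorem apply_self_pos_of_orthonormal_basis [LinearOrder R] [IsStrictOrderedRing R]
    (hb : ∀ i j, B (b i) (b j) = if i = j then 1 else 0) {x : M} (hx : x ≠ 0) :
    0 < B x x := by
  rw [apply_self_eq_sum_sq_repr_of_orthonormal_basis hb]
  have support_nonempty : (b.repr x).support.Nonempty := by simpa using hx
  exact Finset.sum_pos (fun i hi => sq_pos_of_ne_zero (Finsupp.mem_support_iff.mp hi))
    support_nonempty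

end BilinearForm

section IsCompl

variable {R M ι κ : Type*} [Ring R] [AddCommGroup M] [Module R M] {P Q : Submodule R M}

/-- The basis of a module obtained by joining bases of two complementary submodules. -/
noncomputable def basisOfIsCompl (h : IsCompl P Q) (u : Basis ι R P) (v : Basis κ R Q) :
    Basis (ι ⊕ κ) R M :=
  (u.prod v).map (P.prodEquivOfIsCompl Q h)

@[simp]
theorem basisOfIsCompl_inl (h : IsCompl P Q) (u : Basis ι R P) (v : Basis κ R Q) (i : ι) :
    basisOfIsCompl h u v (Sum.inl i) = u i := by
  simp [basisOfIsCompl]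

@[simp]
theorem basisOfIsCompl_inr (h : IsCompl P Q) (u : Basis ι R P) (v : Basis κ R Q) (i : κ) :
    basisOfIsCompl h u v (Sum.inr i) = v i := by
  simp [basisOfIsCompl]

end IsCompl

section Hyperbolic

variable {R M ι : Type*} [CommRing R] [AddCommGroup M] [Module R M] {ε : R}
  {f : M →ₗ[R] M →ₗ[R] R} {J : M →ₗ[R] M} {b : Basis (ι ⊕ ι) R M}

/-- A hyperbolic (for alternating `f`: symplectic) basis of a bilinear form: the two halves of
`b`, indexed by `Sum.inl` and `Sum.inr`, span totally isotropic submodules and are dual to each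
other. Only the pairing of the first half with the second is prescribed; the opposite pairing is
left to the symmetry type of `f`. -/
structure IsHyperbolicBasis [DecidableEq ι] (f : M →ₗ[R] M →ₗ[R] R)
    (b : Basis (ι ⊕ ι) R M) : Prop where
  inl_inl : ∀ i j, f (b (Sum.inl i)) (b (Sum.inl j)) = 0
  inr_inr : ∀ i j, f (b (Sum.inr i)) (b (Sum.inr j)) = 0
  inl_inr : ∀ i j, f (b (Sum.inl i)) (b (Sum.inr j)) = if i = j then 1 else 0

/-- `J` exchanges the two halves of the basis `b`, up to the factor `ε` on the way back. -/
structure IsTwistedSwap (ε : R) (b : Basis (ι ⊕ ι) R M) (J : M →ₗ[R] M) : Prop where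
  map_inl : ∀ i, J (b (Sum.inl i)) = b (Sum.inr i)
  map_inr : ∀ i, J (b (Sum.inr i)) = ε • b (Sum.inl i)

theorem IsTwistedSwap.map_map (hJ : IsTwistedSwap ε b J) (x : M) : J (J x) = ε • x := by
  suffices J ∘ₗ J = ε • LinearMap.id from LinearMap.congr_fun this x
  refine b.ext ?_
  rintro (i | i) <;> simp [hJ.map_inl, hJ.map_inr]

theorem IsHyperbolicBasis.orthonormal_smul_comp_twistedSwap [DecidableEq ι]
    (hb : IsHyperbolicBasis f b) (hJ : IsTwistedSwap ε b J) (hε : ε * ε = 1)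
    (hf : ∀ x y, f x y = ε * f y x) (i j : ι ⊕ ι) :
    (ε • f ∘ₗ J) (b i) (b j) = if i = j then 1 else 0 := by
  have inr_inl (i j : ι) : f (b (Sum.inr i)) (b (Sum.inl j)) = if i = j then ε else 0 := by
    simp [hf (b (Sum.inr i)), hb.inl_inr, eq_comm]
  rcases i with i | i <;> rcases j with j | j <;>
    simp [hJ.map_inl, hJ.map_inr, hb.inl_inl, hb.inr_inr, hb.inl_inr, inr_inl, hε]

theorem apply_map_map_of_comp_isSymm (hf : ∀ x y, f x y = ε * f y x)
    (hJ : ∀ x, J (J x) = ε • x) (hD : (f ∘ₗ J).IsSymm) (x y : M) : f (J x) (J y) = f x y :=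
  calc
    f (J x) (J y) = f (J (J y)) x := hD.eq x (J y)
    _ = ε * f y x := by rw [hJ, map_smul, LinearMap.smul_apply, smul_eq_mul]
    _ = f x y := (hf x y).symm

end Hyperbolic

theorem compactly_adapted_J_general
    {R V ι : Type*} [CommRing R] [LinearOrder R] [IsStrictOrderedRing R]
    [AddCommGroup V] [Module R V] [DecidableEq ι]
    {ε : R} (hε : ε * ε = 1) {f : V →ₗ[R] V →ₗ[R] R} (hsym : ∀ x y, f x y = ε * f y x)
    {P Q : Submodule R V}
    (hP : ∀ x ∈ P, ∀ y ∈ P, f x y = 0) (hQ : ∀ x ∈ Q, ∀ y ∈ Q, f x y = 0)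
    (hcompl : IsCompl P Q) (u : Basis ι R P) (v : Basis ι R Q)
    (hdual : ∀ i j, f (u i) (v j) = if i = j then 1 else 0)
    {J : V →ₗ[R] V} (hJu : ∀ i, J (u i) = v i) (hJv : ∀ i, J (v i) = ε • (u i : V)) :
    (∀ x, J (J x) = ε • x) ∧
    (∀ x y, f (J x) (J y) = f x y) ∧
    (∀ x y, f (J x) y = f (J y) x) ∧
    (∀ x, x ≠ 0 → 0 < ε * f (J x) x) := by
  let b := basisOfIsCompl hcompl u v
  have hyperbolic : IsHyperbolicBasis f b :=
    ⟨by simp [b, hP], by simp [b, hQ], by simpa [b] using hdual⟩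
  have swap : IsTwistedSwap ε b J := ⟨by simpa [b] using hJu, by simpa [b] using hJv⟩
  have orthonormal := hyperbolic.orthonormal_smul_comp_twistedSwap swap hε hsym
  have symm : (f ∘ₗ J).IsSymm :=
    isSymm_of_smul_isSymm (.of_mul_eq_one ε hε) (isSymm_of_orthonormal_basis orthonormal)
  exact ⟨swap.map_map, apply_map_map_of_comp_isSymm hsym swap.map_map symm, symm.eq,
    fun _ hx => apply_self_pos_of_orthonormal_basis orthonormal hx⟩

/-- Let `f` be a nondegenerate `ε`-symmetric bilinear form (`ε = ±1`) on a real vector space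
`V` of dimension `2n`, let `P, Q` be complementary `n`-dimensional totally isotropic
subspaces, `u`, `v` dual bases of `P`, `Q` with respect to `f`, and let `J` be the linear map
with `J uᵢ = vᵢ`, `J vᵢ = ε uᵢ`.  Then `J² = ε id`, `J` preserves `f`, and the bilinear form
`D(x,y) = f(Jx, y)` is symmetric and definite; more precisely `ε • D` is positive definite
(so `J` is compactly adapted to `f`). -/
theorem compactly_adapted_J
    (n : ℕ) (V : Type*) [AddCommGroup V] [Module ℝ V] [FiniteDimensional ℝ V]
    (hdim : Module.finrank ℝ V = 2 * n)
    (ε : ℝ) (hε : ε = 1 ∨ ε = -1)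
    (f : V →ₗ[ℝ] V →ₗ[ℝ] ℝ)
    (hnd : ∀ x : V, (∀ y : V, f x y = 0) → x = 0)
    (hsym : ∀ x y : V, f x y = ε * f y x)
    (P Q : Submodule ℝ V)
    (hP : ∀ x ∈ P, ∀ y ∈ P, f x y = 0)
    (hQ : ∀ x ∈ Q, ∀ y ∈ Q, f x y = 0)
    (hPn : Module.finrank ℝ P = n) (hQn : Module.finrank ℝ Q = n)
    (hcompl : IsCompl P Q)
    (u : Module.Basis (Fin n) ℝ P) (v : Module.Basis (Fin n) ℝ Q)
    (hdual : ∀ i j : Fin n, f (u i : V) (v j : V) = if i = j then 1 else 0)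
    (J : V →ₗ[ℝ] V)
    (hJu : ∀ i : Fin n, J (u i : V) = (v i : V))
    (hJv : ∀ i : Fin n, J (v i : V) = ε • (u i : V)) :
    (∀ x : V, J (J x) = ε • x) ∧
    (∀ x y : V, f (J x) (J y) = f x y) ∧
    (∀ x y : V, f (J x) y = f (J y) x) ∧
    (∀ x : V, x ≠ 0 → 0 < ε * f (J x) x) :=
  compactly_adapted_J_general (mul_self_eq_one_iff.mpr hε) hsym hP hQ hcompl u v hdual hJu hJv
end

section
/- Let N ≥ 3 and let X ∈ ℂ^N be a nonzero null vector (⟨X,X⟩ = 0 for the standard symmetric bilinear form). Let 𝔭_X = {T ∈ 𝔰𝔬(N,ℂ) : T(X) ∈ ℂX} (the stabilizer of the line ℂX). Then the orthogonal complement of 𝔭_X with respect to the Killing form of the complex Lie algebra 𝔰𝔬(N,ℂ) is exactly 𝔮_X = {T ∈ 𝔰𝔬(N,ℂ) : T(X) = 0 and T(X^⊥) ⊆ ℂX}. -/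
open Matrix
attribute [local instance 100] LieRing.ofAssociativeRing
/-- The complex Lie algebra `𝔰𝔬(N, ℂ)` of skew-symmetric `N × N` complex matrices,
with bracket `⁅S, T⁆ = S * T - T * S`. -/
def soC (N : ℕ) : LieSubalgebra ℂ (Matrix (Fin N) (Fin N) ℂ) where
  carrier := {T | Tᵀ = -T}
  add_mem' := by
    intro a b ha hb
    simp only [Set.mem_setOf_eq] at *
    simp [Matrix.transpose_add, ha, hb, neg_add]
    abel
  zero_mem' := by simp
  smul_mem' := by
    intro c x hx
    simp only [Set.mem_setOf_eq] at *
    simp [Matrix.transpose_smul, hx]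
  lie_mem' := by
    intro x y hx hy
    simp only [Set.mem_setOf_eq] at *
    show ⁅x, y⁆ᵀ = -⁅x, y⁆
    rw [Ring.lie_def]
    simp only [Matrix.transpose_sub, Matrix.transpose_mul, hx, hy, Matrix.neg_mul,
      Matrix.mul_neg, neg_neg, neg_sub]

/-!
On `𝔰𝔬(n)` the Killing form is `(n - 2) tr (S T)`, so the polar may be computed for the trace form.

If `T ∈ 𝔮_X` and `S ∈ 𝔭_X`, skew-symmetry shows that `T` sends `V → X^⊥ → K X → 0` while `S`
preserves this flag, so `T S` is nilpotent and has trace zero. Conversely, pairing `T` with the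
elements `u ∧ v = u vᵀ - v uᵀ` of `𝔭_X` gives `2 ⟨v, T u⟩ = 0` both for `u = X` and `v` arbitrary,
which is `T X = 0`, and for `u, v ∈ X^⊥`, which is `T (X^⊥) ⊆ (X^⊥)^⊥ = K X`.
-/

open LieAlgebra.Orthogonal Module

section CommRing

variable {n R : Type*} [Fintype n] [CommRing R]

section EndomorphismTrace

theorem trace_matrix_end_eq_sum [DecidableEq n] (f : End R (Matrix n n R)) :
    LinearMap.trace R _ f = ∑ i, ∑ j, f (single i j 1) i j := by
  rw [LinearMap.trace_eq_matrix_trace R (Matrix.stdBasis R n n), Matrix.trace,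
    Fintype.sum_prod_type]
  simp only [diag_apply, LinearMap.toMatrix_apply, Matrix.stdBasis_eq_single]
  rfl

theorem trace_mulLeftRight (A B : Matrix n n R) :
    LinearMap.trace R _ (LinearMap.mulLeftRight R (A, B)) = A.trace * B.trace := by
  classical
  simp [trace_matrix_end_eq_sum, Matrix.trace, Finset.sum_mul_sum, Matrix.mul_apply,
    Matrix.single_apply, ite_and]

theorem trace_mulLeftRight_comp_transpose (A B : Matrix n n R) :
    LinearMap.trace R _
      (LinearMap.mulLeftRight R (A, B) ∘ₗ (transposeLinearEquiv n n R R).toLinearMap) =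
      (A * Bᵀ).trace := by
  classical
  simp [trace_matrix_end_eq_sum, Matrix.trace, Matrix.mul_apply, Matrix.single_apply, ite_and]

variable [DecidableEq n]

theorem ad_comp_ad_eq_mulLeftRight (A B : Matrix n n R) :
    LieAlgebra.ad R _ A ∘ₗ LieAlgebra.ad R _ B =
      LinearMap.mulLeftRight R (A * B, 1) - LinearMap.mulLeftRight R (A, B) -
        LinearMap.mulLeftRight R (B, A) + LinearMap.mulLeftRight R (1, B * A) := by
  refine LinearMap.ext fun M => ?_
  simp only [LinearMap.comp_apply, LieAlgebra.ad_apply, Ring.lie_def, LinearMap.add_apply,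
    LinearMap.sub_apply, LinearMap.mulLeftRight_apply]
  noncomm_ring

theorem killingForm_matrix (A B : Matrix n n R) :
    killingForm R (Matrix n n R) A B =
      2 * (Fintype.card n * (A * B).trace - A.trace * B.trace) := by
  simp only [killingForm_apply_apply, ad_comp_ad_eq_mulLeftRight, map_add, map_sub,
    trace_mulLeftRight, trace_one, Matrix.trace_mul_comm B A]
  ring

theorem trace_ad_comp_ad_comp_transpose (A B : Matrix n n R) :
    LinearMap.trace R _ ((LieAlgebra.ad R _ A ∘ₗ LieAlgebra.ad R _ B) ∘ₗ
      (transposeLinearEquiv n n R R).toLinearMap) =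
      2 * ((A * B).trace - (A * Bᵀ).trace) := by
  have trace_transpose_swap : (B * Aᵀ).trace = (A * Bᵀ).trace := by
    rw [← trace_transpose, transpose_mul, transpose_transpose]
  simp only [ad_comp_ad_eq_mulLeftRight, LinearMap.add_comp, LinearMap.sub_comp, map_add, map_sub,
    trace_mulLeftRight_comp_transpose, transpose_one, mul_one, one_mul, trace_transpose,
    Matrix.trace_mul_comm B A, trace_transpose_swap]
  ring

end EndomorphismTrace

section SkewSymmetric

theorem dotProduct_mulVec_of_transpose_eq_neg {T : Matrix n n R} (hT : Tᵀ = -T) (u v : n → R) :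
    v ⬝ᵥ T *ᵥ u = -(u ⬝ᵥ T *ᵥ v) := by
  rw [dotProduct_mulVec, ← mulVec_transpose, hT, neg_mulVec, neg_dotProduct, dotProduct_comm]

theorem trace_eq_zero_of_transpose_eq_neg [IsDomain R] (h2 : (2 : R) ≠ 0) {T : Matrix n n R}
    (hT : Tᵀ = -T) : T.trace = 0 := by
  have trace_eq_neg : T.trace = -T.trace := by rw [← trace_neg, ← hT, trace_transpose]
  exact (mul_eq_zero_iff_left h2).mp (by linear_combination trace_eq_neg)

theorem sub_transpose_mem_so [DecidableEq n] (M : Matrix n n R) : M - Mᵀ ∈ so n R := by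
  rw [mem_so, transpose_sub, transpose_transpose, neg_sub]

/-- The skew-symmetric matrix `u vᵀ - v uᵀ`, which represents the bivector `u ∧ v` under the
identification of `⋀²` with `𝔰𝔬` given by the dot product. -/
def wedgeMatrix (u v : n → R) : Matrix n n R := vecMulVec u v - vecMulVec v u

theorem wedgeMatrix_mem_so [DecidableEq n] (u v : n → R) : wedgeMatrix u v ∈ so n R := by
  rw [wedgeMatrix, ← transpose_vecMulVec u v]
  exact sub_transpose_mem_so _

theorem wedgeMatrix_mulVec (u v x : n → R) :
    wedgeMatrix u v *ᵥ x = (v ⬝ᵥ x) • u - (u ⬝ᵥ x) • v := by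
  simp [wedgeMatrix, sub_mulVec, vecMulVec_mulVec]

theorem trace_mul_wedgeMatrix {T : Matrix n n R} (hT : Tᵀ = -T) (u v : n → R) :
    (T * wedgeMatrix u v).trace = 2 * (v ⬝ᵥ T *ᵥ u) := by
  rw [wedgeMatrix, Matrix.mul_sub, mul_vecMulVec, mul_vecMulVec, trace_sub, trace_vecMulVec,
    trace_vecMulVec, dotProduct_comm, dotProduct_comm _ u,
    dotProduct_mulVec_of_transpose_eq_neg hT v u]
  ring

end SkewSymmetric

theorem killingForm_so [IsDomain R] [IsPrincipalIdealRing R] [DecidableEq n] (h2 : (2 : R) ≠ 0)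
    (S T : so n R) :
    killingForm R (so n R) S T = (Fintype.card n - 2) * (S.1 * T.1).trace := by
  let adS_adT : End R (Matrix n n R) := LieAlgebra.ad R _ S.1 ∘ₗ LieAlgebra.ad R _ T.1
  -- `M ↦ ad S (ad T (M - Mᵀ))` takes values in `𝔰𝔬`, where it equals `2 ad S ∘ ad T`, so its trace
  -- on all matrices is twice the Killing form.
  let skewed : End R (Matrix n n R) :=
    adS_adT - adS_adT ∘ₗ (transposeLinearEquiv n n R R).toLinearMap
  have hS : S.1ᵀ = -S.1 := (mem_so n R _).mp S.2
  have hT : T.1ᵀ = -T.1 := (mem_so n R _).mp T.2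
  have skewed_apply (M : Matrix n n R) : skewed M = ⁅S.1, ⁅T.1, M - Mᵀ⁆⁆ := by
    rw [lie_sub, lie_sub]
    rfl
  have skewed_mem (M : Matrix n n R) : skewed M ∈ (so n R).toSubmodule := by
    rw [skewed_apply]
    exact (so n R).lie_mem S.2 ((so n R).lie_mem T.2 (sub_transpose_mem_so M))
  have skewed_restrict : skewed.restrict (fun M _ => skewed_mem M) =
      (2 : R) • (LieAlgebra.ad R (so n R) S ∘ₗ LieAlgebra.ad R (so n R) T) := by
    refine LinearMap.ext fun M => Subtype.ext ?_
    have hM : M.1ᵀ = -M.1 := (mem_so n R _).mp M.2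
    change skewed M.1 = (2 : R) • ⁅S.1, ⁅T.1, M.1⁆⁆
    rw [skewed_apply, hM, sub_neg_eq_add, ← two_smul R, lie_smul, lie_smul]
  apply mul_left_cancel₀ h2
  calc 2 * killingForm R (so n R) S T
      = LinearMap.trace R _ skewed := by
        rw [← LinearMap.trace_restrict_eq_of_forall_mem _ skewed skewed_mem, skewed_restrict,
          map_smul, smul_eq_mul, killingForm_apply_apply]
        rfl
    _ = killingForm R (Matrix n n R) S.1 T.1 - 2 * ((S.1 * T.1).trace - (S.1 * T.1ᵀ).trace) := by
        rw [map_sub, trace_ad_comp_ad_comp_transpose, killingForm_apply_apply]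
    _ = 2 * ((Fintype.card n - 2) * (S.1 * T.1).trace) := by
        rw [killingForm_matrix, trace_eq_zero_of_transpose_eq_neg h2 hS, hT, Matrix.mul_neg,
          trace_neg]
        ring

end CommRing

section Field

variable {n K : Type*} [Fintype n] [Field K]

theorem exists_eq_smul_of_forall_dotProduct_eq_zero {x y : n → K}
    (h : ∀ v, x ⬝ᵥ v = 0 → y ⬝ᵥ v = 0) : ∃ c : K, y = c • x := by
  classical
  have mem_span : dotProductEquiv K n y ∈
      Submodule.span K (Set.range fun _ : Unit => dotProductEquiv K n x) :=
    mem_span_of_iInf_ker_le_ker (by simpa [SetLike.le_def] using h)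
  rw [Set.range_const, Submodule.mem_span_singleton] at mem_span
  obtain ⟨c, hc⟩ := mem_span
  exact ⟨c, (dotProductEquiv K n).injective (by rw [map_smul, hc])⟩

theorem trace_mul_eq_zero_of_mulVec_flag {S T : Matrix n n K} {X : n → K}
    (hS : Sᵀ = -S) (hT : Tᵀ = -T) (hSX : ∃ c : K, S *ᵥ X = c • X) (hTX : T *ᵥ X = 0)
    (hTperp : ∀ w, X ⬝ᵥ w = 0 → ∃ c : K, T *ᵥ w = c • X) : (T * S).trace = 0 := by
  classical
  obtain ⟨a, ha⟩ := hSX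
  have T_mem_perp (v : n → K) : X ⬝ᵥ T *ᵥ v = 0 := by
    rw [dotProduct_mulVec_of_transpose_eq_neg hT, hTX, dotProduct_zero, neg_zero]
  have S_mem_perp (w : n → K) (hw : X ⬝ᵥ w = 0) : X ⬝ᵥ S *ᵥ w = 0 := by
    rw [dotProduct_mulVec_of_transpose_eq_neg hS, ha, dotProduct_smul, dotProduct_comm, hw,
      smul_zero, neg_zero]
  have cube_eq_zero : (T * S) ^ 3 = 0 := by
    refine Matrix.ext_of_mulVec_single fun i => ?_
    obtain ⟨b, hb⟩ := hTperp _ (S_mem_perp _ (T_mem_perp (S *ᵥ Pi.single i 1)))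
    simp only [pow_succ, pow_zero, one_mul, ← mulVec_mulVec, hb, mulVec_smul, ha, hTX, smul_zero,
      zero_mulVec]
  exact (isNilpotent_trace_of_isNilpotent ⟨3, cube_eq_zero⟩).eq_zero

variable [DecidableEq n]

theorem forall_trace_mul_eq_zero_iff (h2 : (2 : K) ≠ 0) {X : n → K} (hnull : X ⬝ᵥ X = 0)
    {T : Matrix n n K} (hT : Tᵀ = -T) :
    (∀ S : so n K, (∃ c : K, S.1 *ᵥ X = c • X) → (T * S.1).trace = 0) ↔
      T *ᵥ X = 0 ∧ ∀ w, X ⬝ᵥ w = 0 → ∃ c : K, T *ᵥ w = c • X := by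
  constructor
  · intro h
    have dotProduct_eq_zero_of_wedge (u v : n → K)
        (huv : ∃ c : K, (v ⬝ᵥ X) • u - (u ⬝ᵥ X) • v = c • X) : T *ᵥ u ⬝ᵥ v = 0 := by
      have trace_eq_zero := h ⟨wedgeMatrix u v, wedgeMatrix_mem_so u v⟩
        (by simpa only [wedgeMatrix_mulVec] using huv)
      rw [trace_mul_wedgeMatrix hT, mul_eq_zero_iff_left h2] at trace_eq_zero
      rwa [dotProduct_comm]
    refine ⟨dotProduct_eq_zero _ fun v => ?_, fun w hw => ?_⟩
    · exact dotProduct_eq_zero_of_wedge X v ⟨v ⬝ᵥ X, by rw [hnull, zero_smul, sub_zero]⟩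
    · refine exists_eq_smul_of_forall_dotProduct_eq_zero fun v hv => ?_
      exact dotProduct_eq_zero_of_wedge w v
        ⟨0, by simp only [dotProduct_comm _ X, hv, hw, zero_smul, sub_zero]⟩
  · rintro ⟨hTX, hTperp⟩ S hSX
    exact trace_mul_eq_zero_of_mulVec_flag ((mem_so n K _).mp S.2) hT hSX hTX hTperp

theorem killing_polar_of_pX_general (h2 : (2 : K) ≠ 0) (hn : (Fintype.card n : K) ≠ 2)
    (X : n → K) (hnull : X ⬝ᵥ X = 0) (T : so n K) :
    (∀ S : so n K, (∃ c : K, S.1 *ᵥ X = c • X) → killingForm K (so n K) T S = 0) ↔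
      T.1 *ᵥ X = 0 ∧ ∀ w, X ⬝ᵥ w = 0 → ∃ c : K, T.1 *ᵥ w = c • X := by
  simp only [killingForm_so h2, mul_eq_zero_iff_left (sub_ne_zero.mpr hn)]
  exact forall_trace_mul_eq_zero_iff h2 hnull ((mem_so n K _).mp T.2)

end Field

theorem soC_eq_so (N : ℕ) : soC N = so (Fin N) ℂ := by
  ext T
  rw [mem_so]
  rfl

/-- For `N ≥ 3` and a nonzero null vector `X ∈ ℂ^N`, the orthogonal complement, with respect
to the Killing form of `𝔰𝔬(N, ℂ)`, of the parabolic subalgebra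
`𝔭_X = {T ∈ 𝔰𝔬(N,ℂ) : T X ∈ ℂ X}` is exactly
`𝔮_X = {T ∈ 𝔰𝔬(N,ℂ) : T X = 0 and T (X^⊥) ⊆ ℂ X}`. -/
theorem killing_polar_of_pX
    (N : ℕ) (hN : 3 ≤ N) (X : Fin N → ℂ) (hX0 : X ≠ 0)
    (hnull : dotProduct X X = 0) :
    ∀ T : soC N,
      ((∀ S : soC N, (∃ c : ℂ, (S : Matrix (Fin N) (Fin N) ℂ).mulVec X = c • X) →
          killingForm ℂ (soC N) T S = 0)
        ↔ ((T : Matrix (Fin N) (Fin N) ℂ).mulVec X = 0 ∧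
            ∀ w : Fin N → ℂ, dotProduct X w = 0 →
              ∃ c : ℂ, (T : Matrix (Fin N) (Fin N) ℂ).mulVec w = c • X)) := by
  rw [soC_eq_so]
  exact killing_polar_of_pX_general two_ne_zero (by rw [Fintype.card_fin]; norm_cast; lia) X hnull
end

section
/- Let N > 3 and let X, Y ∈ ℂ^N be nonzero null vectors. Then ⟨X,Y⟩ ≠ 0 if and only if 𝔮_X ∩ 𝔮_Y = {0}, where 𝔮_Z = {T ∈ 𝔰𝔬(N,ℂ) : T(Z) = 0 and T(Z^⊥) ⊆ ℂZ}. (This says the corresponding parabolic subalgebras are opposite exactly when ⟨X,Y⟩ ≠ 0.) -/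
open Matrix

/-- `𝔮_Z = {T ∈ 𝔰𝔬(N,ℂ) : T Z = 0 and T (Z^⊥) ⊆ ℂ Z}`, as a set of matrices. -/
def qSet (N : ℕ) (Z : Fin N → ℂ) : Set (Matrix (Fin N) (Fin N) ℂ) :=
  {T | Tᵀ = -T ∧ T.mulVec Z = 0 ∧
    ∀ w : Fin N → ℂ, dotProduct Z w = 0 → ∃ c : ℂ, T.mulVec w = c • Z}

/-!
If `⟨x, y⟩ ≠ 0`, then `V = span {x, y} ⊕ {x, y}^⊥`; an element of `𝔮_x ∩ 𝔮_y` kills the first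
summand and maps the second into `K x ∩ K y = 0`.

If `⟨x, y⟩ = 0`, the infinitesimal rotation `x ∧ u : w ↦ ⟨u, w⟩ x - ⟨x, w⟩ u` lies in `𝔮_x` for all
`u ∈ x^⊥`, and is nonzero unless `u ∈ K x`. When `y ∉ K x`, take `u = y`: then `x ∧ y = -(y ∧ x)`
lies in `𝔮_y` too. When `y ∈ K x`, we have `𝔮_x = 𝔮_y`, and some `u ∈ x^⊥` is outside `K x` because
`x^⊥` has dimension at least `2`.
-/

open Module Submodule

theorem exists_mem_ker_notMem_span_singleton {K V : Type*} [DivisionRing K] [AddCommGroup V]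
    [Module K V] (hV : 2 < Module.rank K V) (f : V →ₗ[K] K) (x : V) :
    ∃ u, f u = 0 ∧ u ∉ span K {x} := by
  by_contra! ker_le
  have rank_ker : Module.rank K f.ker ≤ 1 :=
    calc Module.rank K f.ker ≤ Module.rank K (span K {x}) := Submodule.rank_mono ker_le
      _ ≤ 1 := by simpa using rank_span_le (R := K) {x}
  have rank_quotient : Module.rank K (V ⧸ f.ker) ≤ 1 := by
    rw [← Cardinal.lift_le, f.quotKerEquivRange.lift_rank_eq, Cardinal.lift_one,
      Cardinal.lift_le_one_iff]
    simpa using f.range.rank_le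
  refine hV.not_ge ?_
  calc Module.rank K V = Module.rank K (V ⧸ f.ker) + Module.rank K f.ker :=
        (rank_quotient_add_rank f.ker).symm
    _ ≤ 1 + 1 := add_le_add rank_quotient rank_ker
    _ = 2 := one_add_one_eq_two

section CommRing

variable {R M : Type*} [CommRing R] [AddCommGroup M] [Module R M]

/-- The submodule `𝔮_x` of skew-adjoint endomorphisms that kill `x` and map `x^⊥` into the line
`R x`. For a nondegenerate form on a complex space of dimension at least `3` and a null vector
`x ≠ 0`, it is the nilradical of the parabolic subalgebra stabilizing that line. -/
def parabolicNilradical (B : LinearMap.BilinForm R M) (x : M) : Submodule R (End R M) :=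
  B.skewAdjointSubmodule ⊓ compatibleMaps (span R {x}) ⊥ ⊓ compatibleMaps (B x).ker (span R {x})

/-- The infinitesimal rotation `x ∧ u`, sending `w` to `⟨u, w⟩ x - ⟨x, w⟩ u`.
For `u ∈ x^⊥` these are the explicit elements of `𝔮_x`. -/
def infinitesimalRotation (B : LinearMap.BilinForm R M) (x u : M) : End R M :=
  (B u).smulRight x - (B x).smulRight u

variable {B : LinearMap.BilinForm R M} {x u : M}

theorem mem_parabolicNilradical {T : End R M} :
    T ∈ parabolicNilradical B x ↔
      B.IsSkewAdjoint T ∧ T x = 0 ∧ ∀ w, B x w = 0 → T w ∈ span R {x} := by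
  have kills_iff : T ∈ compatibleMaps (span R {x}) ⊥ ↔ T x = 0 :=
    span_singleton_le_iff_mem _ _
  simp only [parabolicNilradical, mem_inf, LinearMap.mem_skewAdjointSubmodule, kills_iff,
    and_assoc]
  rfl

theorem infinitesimalRotation_apply (w : M) :
    infinitesimalRotation B x u w = B u w • x - B x w • u :=
  rfl

theorem neg_infinitesimalRotation :
    -infinitesimalRotation B x u = infinitesimalRotation B u x :=
  neg_sub _ _

theorem isSkewAdjoint_infinitesimalRotation (hB : B.IsSymm) :
    B.IsSkewAdjoint (infinitesimalRotation B x u) := by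
  intro v w
  simp only [Pi.neg_apply, infinitesimalRotation_apply, map_neg, map_sub, map_smul,
    LinearMap.sub_apply, LinearMap.smul_apply, smul_eq_mul, LinearMap.neg_apply, hB.eq v]
  ring

theorem infinitesimalRotation_mem_parabolicNilradical (hB : B.IsSymm) (hx : B x x = 0)
    (hxu : B x u = 0) : infinitesimalRotation B x u ∈ parabolicNilradical B x := by
  refine mem_parabolicNilradical.2 ⟨isSkewAdjoint_infinitesimalRotation hB, ?_, fun w hw ↦ ?_⟩
  · simp [infinitesimalRotation_apply, hx, hB.eq u x, hxu]
  · simpa [infinitesimalRotation_apply, hw] using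
      smul_mem _ (B u w) (mem_span_singleton_self x)

end CommRing

section Field

variable {K V : Type*} [Field K] [AddCommGroup V] [Module K V]
  {B : LinearMap.BilinForm K V} {x y u : V}

theorem parabolicNilradical_smul {c : K} (hc : c ≠ 0) :
    parabolicNilradical B (c • x) = parabolicNilradical B x := by
  simp only [parabolicNilradical, span_singleton_smul_eq hc.isUnit, map_smul,
    LinearMap.ker_smul _ _ hc]

theorem infinitesimalRotation_ne_zero (hx : B x ≠ 0) (hu : u ∉ span K {x}) :
    infinitesimalRotation B x u ≠ 0 := by
  intro rotation_eq_zero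
  obtain ⟨w, hw⟩ := DFunLike.ne_iff.1 hx
  have smul_eq : B u w • x = B x w • u :=
    sub_eq_zero.1 (DFunLike.congr_fun rotation_eq_zero w)
  refine hu ((smul_mem_iff _ hw).1 ?_)
  exact smul_eq ▸ smul_mem _ _ (mem_span_singleton_self x)

theorem not_disjoint_parabolicNilradical (hB : B.IsSymm) (hV : 2 < Module.rank K V)
    (hBx : B x ≠ 0) (hy0 : y ≠ 0) (hx : B x x = 0) (hy : B y y = 0) (hxy : B x y = 0) :
    ¬Disjoint (parabolicNilradical B x) (parabolicNilradical B y) := by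
  suffices ∃ u ∉ span K {x}, B x u = 0 ∧ infinitesimalRotation B x u ∈ parabolicNilradical B y by
    obtain ⟨u, hu, hxu, mem_y⟩ := this
    exact fun disjoint ↦ infinitesimalRotation_ne_zero hBx hu <| disjoint_def.1 disjoint _
      (infinitesimalRotation_mem_parabolicNilradical hB hx hxu) mem_y
  by_cases y_mem : y ∈ span K {x}
  · obtain ⟨c, rfl⟩ := mem_span_singleton.1 y_mem
    obtain ⟨u, hxu, hu⟩ := exists_mem_ker_notMem_span_singleton hV (B x) x
    refine ⟨u, hu, hxu, ?_⟩
    rw [parabolicNilradical_smul (left_ne_zero_of_smul hy0)]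
    exact infinitesimalRotation_mem_parabolicNilradical hB hx hxu
  · refine ⟨y, y_mem, hxy, ?_⟩
    rw [← neg_infinitesimalRotation]
    exact neg_mem (infinitesimalRotation_mem_parabolicNilradical hB hy (hB.eq x y ▸ hxy))

theorem exists_orthogonal_add_smul_add_smul (hB : B.IsSymm) (hx : B x x = 0) (hy : B y y = 0)
    (hxy : B x y ≠ 0) (v : V) :
    ∃ (w : V) (a b : K), B x w = 0 ∧ B y w = 0 ∧ v = w + a • x + b • y := by
  refine ⟨v - (B y v / B x y) • x - (B x v / B x y) • y, B y v / B x y, B x v / B x y,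
    ?_, ?_, by abel⟩
  · simp [hx, hxy]
  · simp [hy, hB.eq y x, hxy]

theorem disjoint_parabolicNilradical (hB : B.IsSymm) (hx : B x x = 0) (hy : B y y = 0)
    (hxy : B x y ≠ 0) : Disjoint (parabolicNilradical B x) (parabolicNilradical B y) := by
  refine disjoint_def.2 fun T mem_x mem_y ↦ LinearMap.ext fun v ↦ ?_
  obtain ⟨-, Tx, T_orthogonal_x⟩ := mem_parabolicNilradical.1 mem_x
  obtain ⟨-, Ty, T_orthogonal_y⟩ := mem_parabolicNilradical.1 mem_y
  obtain ⟨w, a, b, hxw, hyw, rfl⟩ := exists_orthogonal_add_smul_add_smul hB hx hy hxy v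
  obtain ⟨c, hc⟩ := mem_span_singleton.1 (T_orthogonal_x w hxw)
  obtain ⟨d, hd⟩ := mem_span_singleton.1 (T_orthogonal_y w hyw)
  have d_eq_zero : d = 0 := by
    have pairing : d * B x y = c * B x x := by
      simpa using congrArg (B x) (hd.trans hc.symm)
    simpa [hx, hxy] using pairing
  simp [Tx, Ty, ← hd, d_eq_zero]

theorem opposite_iff_dotProduct_ne_zero_general (hB : B.IsSymm) (hV : 2 < Module.rank K V)
    (hBx : B x ≠ 0) (hy0 : y ≠ 0) (hx : B x x = 0) (hy : B y y = 0) :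
    B x y ≠ 0 ↔ Disjoint (parabolicNilradical B x) (parabolicNilradical B y) :=
  ⟨disjoint_parabolicNilradical hB hx hy, fun disjoint hxy ↦
    not_disjoint_parabolicNilradical hB hV hBx hy0 hx hy hxy disjoint⟩

end Field

section DotProduct

variable {R n : Type*} [CommRing R] [Fintype n]

theorem isSymm_dotProductBilin : LinearMap.BilinForm.IsSymm (dotProductBilin (m := n) R R) :=
  ⟨dotProduct_comm⟩

theorem dotProductBilin_ne_zero {v : n → R} (hv : v ≠ 0) : dotProductBilin R R v ≠ 0 :=
  fun h ↦ hv (dotProduct_eq_zero v (DFunLike.congr_fun h))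

theorem isSkewAdjoint_toLin'_dotProductBilin_iff [DecidableEq n] {T : Matrix n n R} :
    (dotProductBilin R R).IsSkewAdjoint (toLin' T) ↔ Tᵀ = -T := by
  have dotProductBilin_eq : dotProductBilin R R = toLinearMap₂' R (1 : Matrix n n R) :=
    LinearMap.ext₂ fun v w ↦ by simp [toLinearMap₂'_apply']
  have neg_toLin' : -⇑(toLin' T) = toLin' (-T) := by
    rw [map_neg]; rfl
  rw [LinearMap.IsSkewAdjoint, neg_toLin', dotProductBilin_eq, isAdjointPair_toLinearMap₂',
    Matrix.IsAdjointPair, mul_one, one_mul]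

end DotProduct

theorem mem_qSet_iff_toLin'_mem_parabolicNilradical {N : ℕ} {Z : Fin N → ℂ}
    {T : Matrix (Fin N) (Fin N) ℂ} :
    T ∈ qSet N Z ↔ toLin' T ∈ parabolicNilradical (dotProductBilin ℂ ℂ) Z := by
  simp [mem_parabolicNilradical, isSkewAdjoint_toLin'_dotProductBilin_iff, mem_span_singleton, qSet,
    eq_comm]

/-- For `N > 3` and nonzero null vectors `X, Y ∈ ℂ^N`, one has `⟨X, Y⟩ ≠ 0` if and only if
`𝔮_X ∩ 𝔮_Y = {0}`; that is, the parabolic subalgebras corresponding to `X` and `Y` are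
opposite exactly when `⟨X, Y⟩ ≠ 0`. -/
theorem opposite_iff_dotProduct_ne_zero
    (N : ℕ) (hN : 3 < N) (X Y : Fin N → ℂ) (hX0 : X ≠ 0) (hY0 : Y ≠ 0)
    (hXnull : dotProduct X X = 0) (hYnull : dotProduct Y Y = 0) :
    dotProduct X Y ≠ 0 ↔
      ∀ T : Matrix (Fin N) (Fin N) ℂ, T ∈ qSet N X → T ∈ qSet N Y → T = 0 := by
  have hrank : 2 < Module.rank ℂ (Fin N → ℂ) := by
    rw [rank_fin_fun]; exact_mod_cast (by omega : 2 < N)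
  refine (opposite_iff_dotProduct_ne_zero_general isSymm_dotProductBilin hrank
    (dotProductBilin_ne_zero hX0) hY0 hXnull hYnull).trans ?_
  simp only [disjoint_def, mem_qSet_iff_toLin'_mem_parabolicNilradical, toLin'.surjective.forall,
    LinearEquiv.map_eq_zero_iff]
end
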